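/- arXiv:1301.6772 — 2 statements merged into one kernel-verified Lean document; each statement's English description precedes it below -/
import Mathlib

section
/- For every prime p and every integer N ≥ 0, the partial sum Σ_{r=0}^{N} p^{−rmn} Σ_{a mod p^r, gcd(a,p)=1} S_{a,p^r}(b) equals p^{−N(mn−R)} · #{X mod p^N : X^T A X ≡ B (mod p^N)}, where X runs over n×m matrices mod p^N. Consequently, if n > (2γ + m(m−1))(R+1), the series 𝔖_p(b) = Σ_{r=0}^{∞} p^{−rmn} Σ_{a mod p^r, gcd(a,p)=1} S_{a,p^r}(b) converges and equals the local density α_p(A,B). -/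
open scoped BigOperators
open MeasureTheory Matrix Filter

noncomputable section

/-- Index type for pairs `(i,j)` with `i ≤ j` (the `R = m(m+1)/2` upper-triangular positions). -/
abbrev Idx (m : ℕ) : Type := {p : Fin m × Fin m // p.1 ≤ p.2}

instance idxNonempty (m : ℕ) [NeZero m] : Nonempty (Idx m) :=
  ⟨⟨(0, 0), le_rfl⟩⟩

/-- `e(z) = exp(2πiz)` -/
def eR (z : ℝ) : ℂ := Complex.exp (2 * Real.pi * Complex.I * z)

/-- `xᵢᵀ A xⱼ` for integer vectors. -/
def quadZ {m n : ℕ} (A : Matrix (Fin n) (Fin n) ℤ) (x : Fin m → Fin n → ℤ)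
    (i j : Fin m) : ℤ :=
  ∑ s, ∑ t, x i s * A s t * x j t

/-- `vᵢᵀ A vⱼ` for real vectors. -/
def quadR {m n : ℕ} (A : Matrix (Fin n) (Fin n) ℤ) (v : Fin m → Fin n → ℝ)
    (i j : Fin m) : ℝ :=
  ∑ s, ∑ t, v i s * (A s t : ℝ) * v j t

/-- The tuple `b = (B_{ij})_{1 ≤ i ≤ j ≤ m}`. -/
def bvec {m : ℕ} (B : Matrix (Fin m) (Fin m) ℤ) (p : Idx m) : ℤ := B p.1.1 p.1.2

/-- `γ_i`, defined by `B₁₁ = B_{ii}^{γ_i}`, i.e. `γ_i = log B₁₁ / log B_{ii}`. -/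
def gamI {m : ℕ} [NeZero m] (B : Matrix (Fin m) (Fin m) ℤ) (i : Fin m) : ℝ :=
  Real.log ((B 0 0 : ℤ) : ℝ) / Real.log ((B i i : ℤ) : ℝ)

/-- `γ = Σ 1/γ_i`. -/
def gamT {m : ℕ} [NeZero m] (B : Matrix (Fin m) (Fin m) ℤ) : ℝ :=
  ∑ i, (gamI B i)⁻¹

/-- `P_i = C^{1/γ_i} B_{ii}^{1/2}`. -/
def PP {m : ℕ} [NeZero m] (C : ℝ) (B : Matrix (Fin m) (Fin m) ℤ) (i : Fin m) : ℝ :=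
  C ^ (gamI B i)⁻¹ * ((B i i : ℤ) : ℝ) ^ ((1 : ℝ) / 2)

/-- `Π = ∏ P_i`. -/
def PiP {m : ℕ} [NeZero m] (C : ℝ) (B : Matrix (Fin m) (Fin m) ℤ) : ℝ :=
  ∏ i, PP C B i

/-- The box of integer tuples `(x₁,…,x_m)` with `|x_i| ≤ P_i` (max-norm). -/
def box (m n : ℕ) [NeZero m] (C : ℝ) (B : Matrix (Fin m) (Fin m) ℤ) :
    Finset (Fin m → Fin n → ℤ) :=
  Finset.Icc (fun i _ => -⌊PP C B i⌋) (fun i _ => ⌊PP C B i⌋)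

/-- The exponential sum `S(α, b)`. -/
def Ssum {m n : ℕ} [NeZero m] (A : Matrix (Fin n) (Fin n) ℤ) (C : ℝ)
    (B : Matrix (Fin m) (Fin m) ℤ) (α : Idx m → ℝ) (b : Idx m → ℤ) : ℂ :=
  ∑ x ∈ box m n C B,
    eR (∑ p : Idx m, α p * ((quadZ A x p.1.1 p.1.2 - b p : ℤ) : ℝ))

/-- The complete exponential sum `S_{a,q}(b)`. -/
def Saq {m n : ℕ} (A : Matrix (Fin n) (Fin n) ℤ) (q : ℤ) (a b : Idx m → ℤ) : ℂ :=
  ∑ z ∈ (Finset.Icc (fun _ _ => 0) (fun _ _ => q - 1) : Finset (Fin m → Fin n → ℤ)),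
    eR ((∑ p : Idx m, (a p : ℝ) * ((quadZ A z p.1.1 p.1.2 - b p : ℤ) : ℝ)) / (q : ℝ))

/-- Residue tuples `a (mod q)` with `gcd(q, a) = 1`. -/
def resid (m : ℕ) (q : ℤ) : Finset (Idx m → ℤ) :=
  (Finset.Icc (fun _ => 0) (fun _ => q - 1)).filter fun a =>
    Int.gcd q (Finset.univ.gcd a) = 1

/-- The `q`-th term of the singular series. -/
def STerm {m n : ℕ} (A : Matrix (Fin n) (Fin n) ℤ) (B : Matrix (Fin m) (Fin m) ℤ)
    (q : ℕ) : ℂ :=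
  ((q : ℂ) ^ (m * n))⁻¹ * ∑ a ∈ resid m (q : ℤ), Saq A (q : ℤ) a (bvec B)

/-- The truncated singular series `𝔖(Q; b)`. -/
def SingT {m n : ℕ} (A : Matrix (Fin n) (Fin n) ℤ) (B : Matrix (Fin m) (Fin m) ℤ)
    (Q : ℝ) : ℂ :=
  ∑ q ∈ Finset.Icc 1 ⌊Q⌋₊, STerm A B q

/-- The singular series `𝔖(b) = Σ_{q=1}^∞ q^{-mn} Σ_{a mod q, (a,q)=1} S_{a,q}(b)`. -/
def Sing {m n : ℕ} (A : Matrix (Fin n) (Fin n) ℤ) (B : Matrix (Fin m) (Fin m) ℤ) : ℂ :=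
  ∑' q : ℕ, STerm A B q

/-- The oscillatory integral `I` with weights `w_p`;
`I(P,β)` is obtained with `w_p = P_iP_jβ_{ij}` and `I(η)` with `w = η`. -/
def Iint {m n : ℕ} (A : Matrix (Fin n) (Fin n) ℤ) (w : Idx m → ℝ) : ℂ :=
  ∫ v in (Set.univ.pi fun _ : Fin m => Set.univ.pi fun _ : Fin n => Set.Icc (-1 : ℝ) 1),
    eR (∑ p : Idx m, w p * quadR A v p.1.1 p.1.2)

/-- The truncated singular integral `𝔍(Q; c)`. -/
def JintT {m n : ℕ} (A : Matrix (Fin n) (Fin n) ℤ) (Q : ℝ) (c : Idx m → ℝ) : ℂ :=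
  ∫ η in (Set.univ.pi fun _ : Idx m => Set.Icc (-Q) Q),
    Iint (n := n) A η * eR (-(∑ p : Idx m, η p * c p))

/-- The singular integral `𝔍(c)`. -/
def Jint {m n : ℕ} (A : Matrix (Fin n) (Fin n) ℤ) (c : Idx m → ℝ) : ℂ :=
  ∫ η : Idx m → ℝ, Iint (n := n) A η * eR (-(∑ p : Idx m, η p * c p))

/-- The major arc `M_{a,q}(Δ)` (with constant `c₀`). -/
def MArc {m : ℕ} [NeZero m] (C : ℝ) (B : Matrix (Fin m) (Fin m) ℤ) (c₀ Δ : ℝ)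
    (q : ℤ) (a : Idx m → ℤ) : Set (Idx m → ℝ) :=
  {α | (∀ p, 0 ≤ α p ∧ α p < 1) ∧
    ∀ p : Idx m, |(q : ℝ) * α p - (a p : ℝ)| ≤
      c₀ * PiP C B ^ Δ * (PP C B p.1.1 * PP C B p.1.2)⁻¹}

/-- The enlarged major arc `M'_{a,q}(Δ)` (with constant `c₀`). -/
def MArc' {m : ℕ} [NeZero m] (C : ℝ) (B : Matrix (Fin m) (Fin m) ℤ) (c₀ Δ : ℝ)
    (q : ℤ) (a : Idx m → ℤ) : Set (Idx m → ℝ) :=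
  {α | (∀ p, 0 ≤ α p ∧ α p < 1) ∧
    ∀ p : Idx m, |(q : ℝ) * α p - (a p : ℝ)| ≤
      c₀ * (q : ℝ) * PiP C B ^ Δ * (PP C B p.1.1 * PP C B p.1.2)⁻¹}

/-- Admissible pairs `(q, a)`: `1 ≤ q ≤ c₀Π^Δ`, `0 ≤ a_{ij} < q`, `gcd(q,a) = 1`. -/
def validAQ {m : ℕ} [NeZero m] (C : ℝ) (B : Matrix (Fin m) (Fin m) ℤ) (c₀ Δ : ℝ)
    (q : ℤ) (a : Idx m → ℤ) : Prop :=
  1 ≤ q ∧ (q : ℝ) ≤ c₀ * PiP C B ^ Δ ∧ (∀ p, 0 ≤ a p ∧ a p < q) ∧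
    Int.gcd q (Finset.univ.gcd a) = 1

/-- The major arcs `M(Δ)`. -/
def MSet {m : ℕ} [NeZero m] (C : ℝ) (B : Matrix (Fin m) (Fin m) ℤ) (c₀ Δ : ℝ) :
    Set (Idx m → ℝ) :=
  ⋃ q : ℤ, ⋃ a : Idx m → ℤ, ⋃ _ : validAQ C B c₀ Δ q a, MArc C B c₀ Δ q a

/-- `N(A,B)`: the number of integral representations of `B` by `A`. -/
def NAB (m n : ℕ) (A : Matrix (Fin n) (Fin n) ℤ) (B : Matrix (Fin m) (Fin m) ℤ) : ℕ :=
  Nat.card {X : Matrix (Fin n) (Fin m) ℤ | Xᵀ * A * X = B}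

/-- `#{X mod q : XᵀAX ≡ B (mod q)}`. -/
def locCount (m n : ℕ) (A : Matrix (Fin n) (Fin n) ℤ) (B : Matrix (Fin m) (Fin m) ℤ)
    (q : ℕ) : ℕ :=
  Nat.card {X : Matrix (Fin n) (Fin m) (ZMod q) |
    Xᵀ * A.map ((↑) : ℤ → ZMod q) * X = B.map ((↑) : ℤ → ZMod q)}

/-- The archimedean density `α_∞(A,B)`. -/
def alphaInf (m n : ℕ) (A : Matrix (Fin n) (Fin n) ℤ)
    (B : Matrix (Fin m) (Fin m) ℤ) : ℝ :=
  ((A.det : ℤ) : ℝ) ^ (-(m : ℝ) / 2) * ((B.det : ℤ) : ℝ) ^ (((n : ℝ) - m - 1) / 2) *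
    Real.pi ^ ((m : ℝ) * (2 * (n : ℝ) - m + 1) / 4) *
    ∏ j ∈ Finset.Ioc (n - m) n, (Real.Gamma ((j : ℝ) / 2))⁻¹

/-- `max_{1≤i≤j≤m} |η_{ij}|`. -/
def maxAbs {m : ℕ} [NeZero m] (η : Idx m → ℝ) : ℝ := ⨆ p : Idx m, |η p|

theorem eR_add (x y : ℝ) : eR (x + y) = eR x * eR y := by
  simp only [eR]
  rw [← Complex.exp_add]
  push_cast
  ring_nf

theorem eR_zero : eR 0 = 1 := by simp [eR]

theorem eR_sum {ι : Type*} (s : Finset ι) (f : ι → ℝ) :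
    eR (∑ i ∈ s, f i) = ∏ i ∈ s, eR (f i) := by
  classical
  induction s using Finset.induction_on with
  | empty => simp [eR_zero]
  | insert i s hi ih => rw [Finset.sum_insert hi, Finset.prod_insert hi, eR_add, ih]

theorem eR_natCast_mul (k : ℕ) (x : ℝ) : eR (k * x) = eR x ^ k := by
  simp only [eR]
  rw [← Complex.exp_nat_mul]
  push_cast
  ring_nf

theorem eR_intCast (k : ℤ) : eR k = 1 := by
  simp only [eR]
  rw [Complex.exp_eq_one_iff]
  exact ⟨k, by push_cast; ring⟩

theorem eR_eq_one_iff (x : ℝ) : eR x = 1 ↔ ∃ k : ℤ, x = k := by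
  constructor
  · intro h
    obtain ⟨k, hk⟩ := Complex.exp_eq_one_iff.mp h
    refine ⟨k, ?_⟩
    have h2 : (2 * (Real.pi : ℂ) * Complex.I) ≠ 0 := Complex.two_pi_I_ne_zero
    rw [mul_comm] at hk
    exact_mod_cast mul_right_cancel₀ h2 hk
  · rintro ⟨k, rfl⟩
    exact eR_intCast k

/-- `e(x / q)` depends only on the integer `x` modulo `q`. -/
theorem eR_div_congr {q : ℤ} (hq : 0 < q) {x y : ℤ} (h : x ≡ y [ZMOD q]) :
    eR ((x : ℝ) / q) = eR ((y : ℝ) / q) := by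
  obtain ⟨k, hk⟩ := h.symm.dvd
  obtain rfl : x = y + q * k := by lia
  have hq' : (q : ℝ) ≠ 0 := by exact_mod_cast hq.ne'
  have h1 : (((y + q * k : ℤ) : ℝ)) / q = (y : ℝ) / q + (k : ℤ) := by
    push_cast
    field_simp
  rw [h1, eR_add, eR_intCast, mul_one]

theorem sum_Icc_intCast_eq_sum_range (q : ℕ) (f : ℤ → ℂ) :
    ∑ a ∈ Finset.Icc (0 : ℤ) ((q : ℤ) - 1), f a = ∑ k ∈ Finset.range q, f k := by
  symm
  refine Finset.sum_bij (fun k _ => (k : ℤ)) ?_ ?_ ?_ ?_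
  · intro k hk
    simp only [Finset.mem_range] at hk
    simp only [Finset.mem_Icc]
    lia
  · intro k _ l _ h
    exact_mod_cast h
  · intro a ha
    simp only [Finset.mem_Icc] at ha
    exact ⟨a.toNat, by simp only [Finset.mem_range]; lia, by lia⟩
  · intro _ _
    rfl

/-- Orthogonality of additive characters modulo `q`. -/
theorem sum_eR_mul_div (q : ℕ) (hq : 0 < q) (c : ℤ) :
    ∑ a ∈ Finset.Icc (0 : ℤ) ((q : ℤ) - 1), eR ((a : ℝ) * c / q) =
      if (q : ℤ) ∣ c then (q : ℂ) else 0 := by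
  have hq' : (q : ℝ) ≠ 0 := by exact_mod_cast hq.ne'
  rw [sum_Icc_intCast_eq_sum_range q fun a => eR ((a : ℝ) * c / q)]
  have hpow : ∀ k : ℕ, eR ((((k : ℕ) : ℤ) : ℝ) * c / q) = eR ((c : ℝ) / q) ^ k := by
    intro k
    rw [← eR_natCast_mul]
    push_cast
    ring_nf
  simp only [hpow]
  split_ifs with h
  · obtain ⟨k, rfl⟩ := h
    have h1 : eR ((((q : ℤ) * k : ℤ) : ℝ) / q) = 1 := by
      rw [eR_eq_one_iff]
      exact ⟨k, by push_cast; field_simp⟩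
    simp only [h1, one_pow, Finset.sum_const, Finset.card_range, nsmul_eq_mul, mul_one]
  · have h1 : eR ((c : ℝ) / q) ≠ 1 := by
      intro h2
      obtain ⟨k, hk⟩ := (eR_eq_one_iff _).mp h2
      apply h
      refine ⟨k, ?_⟩
      rw [div_eq_iff hq'] at hk
      have : (c : ℝ) = ((q : ℤ) * k : ℤ) := by push_cast; rw [hk]; ring
      exact_mod_cast this
    rw [geom_sum_eq h1, ← eR_natCast_mul, mul_div_cancel₀ _ hq', eR_intCast]
    simp

/-- Orthogonality of additive characters modulo `q` in several variables. -/
theorem sum_eR_sum_mul_div {ι : Type*} [Fintype ι] [DecidableEq ι] (q : ℕ) (hq : 0 < q)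
    (c : ι → ℤ) :
    ∑ a ∈ Finset.Icc (fun _ : ι => (0 : ℤ)) (fun _ => (q : ℤ) - 1),
        eR ((∑ p, (a p : ℝ) * (c p : ℝ)) / q) =
      if ∀ p, (q : ℤ) ∣ c p then (q : ℂ) ^ Fintype.card ι else 0 := by
  simp only [Finset.sum_div, eR_sum]
  have h := Finset.prod_univ_sum (fun _ : ι => Finset.Icc (0 : ℤ) ((q : ℤ) - 1))
    (fun p a => eR ((a : ℝ) * (c p : ℝ) / q))
  rw [show Finset.Icc (fun _ : ι => (0 : ℤ)) (fun _ => (q : ℤ) - 1) =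
    Fintype.piFinset fun _ : ι => Finset.Icc (0 : ℤ) ((q : ℤ) - 1) from rfl, ← h]
  simp only [sum_eR_mul_div q hq]
  split_ifs with hd
  · simp [hd]
  · push Not at hd
    obtain ⟨p, hp⟩ := hd
    exact Finset.prod_eq_zero (Finset.mem_univ p) (by simp [hp])

/-- The sum of a `q`-periodic function over the box of side `q * k`. -/
theorem sum_Icc_mul_of_periodic {m n : ℕ} (q k : ℕ) (hq : 0 < q)
    (f : (Fin m → Fin n → ℤ) → ℂ) (hf : ∀ z, f (fun i s => z i s % q) = f z) :
    ∑ z ∈ (Finset.Icc (fun _ _ => 0) (fun _ _ => (q : ℤ) * k - 1) :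
        Finset (Fin m → Fin n → ℤ)), f z =
      (k : ℂ) ^ (m * n) *
        ∑ z ∈ (Finset.Icc (fun _ _ => 0) (fun _ _ => (q : ℤ) - 1) :
          Finset (Fin m → Fin n → ℤ)), f z := by
  have hq' : (0 : ℤ) < q := by exact_mod_cast hq
  have hcard : (Finset.Icc (fun _ _ => 0) (fun _ _ => (k : ℤ) - 1) :
      Finset (Fin m → Fin n → ℤ)).card = k ^ (m * n) := by
    simp [Pi.card_Icc, ← pow_mul, mul_comm]
  calc _ = ∑ w ∈ (Finset.Icc (fun _ _ => 0) (fun _ _ => (k : ℤ) - 1) :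
        Finset (Fin m → Fin n → ℤ)) ×ˢ (Finset.Icc (fun _ _ => 0) (fun _ _ => (q : ℤ) - 1) :
          Finset (Fin m → Fin n → ℤ)), f w.2 := by
        refine Finset.sum_bij' (fun z _ => (fun i s => z i s / q, fun i s => z i s % q))
          (fun w _ => fun i s => w.2 i s + q * w.1 i s) ?_ ?_ ?_ ?_ ?_
        · intro z hz
          simp only [Finset.mem_Icc, Finset.mem_product, Pi.le_def] at hz ⊢
          refine ⟨⟨fun i s => Int.ediv_nonneg (hz.1 i s) hq'.le, fun i s => ?_⟩,
            fun i s => Int.emod_nonneg _ hq'.ne', fun i s => ?_⟩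
          · have h1 := hz.2 i s
            have : z i s / q < k := Int.ediv_lt_of_lt_mul hq' (by rw [mul_comm]; lia)
            lia
          · have := Int.emod_lt_of_pos (z i s) hq'
            lia
        · intro w hw
          simp only [Finset.mem_Icc, Finset.mem_product, Pi.le_def] at hw ⊢
          obtain ⟨⟨h1, h2⟩, h3, h4⟩ := hw
          refine ⟨fun i s => add_nonneg (h3 i s) (mul_nonneg hq'.le (h1 i s)), fun i s => ?_⟩
          have h5 := h4 i s
          have h6 := mul_le_mul_of_nonneg_left (h2 i s) hq'.le
          rw [mul_sub] at h6
          lia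
        · intro z _
          funext i s
          exact Int.emod_add_mul_ediv _ _
        · intro w hw
          simp only [Finset.mem_Icc, Finset.mem_product, Pi.le_def] at hw
          obtain ⟨-, h3, h4⟩ := hw
          have hlt : ∀ i s, w.2 i s < q := fun i s => by have := h4 i s; lia
          refine Prod.ext ?_ ?_
          · funext i s
            change (w.2 i s + q * w.1 i s) / q = w.1 i s
            rw [Int.add_mul_ediv_left _ _ hq'.ne', Int.ediv_eq_zero_of_lt (h3 i s) (hlt i s),
              zero_add]
          · funext i s
            change (w.2 i s + q * w.1 i s) % q = w.2 i s
            rw [Int.add_mul_emod_self_left, Int.emod_eq_of_lt (h3 i s) (hlt i s)]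
        · intro z _
          exact (hf z).symm
    _ = _ := by
        rw [Finset.sum_product]
        simp only [Finset.sum_const, hcard, nsmul_eq_mul, Nat.cast_pow]

theorem quadZ_modEq {m n : ℕ} (A : Matrix (Fin n) (Fin n) ℤ) (q : ℤ)
    {x y : Fin m → Fin n → ℤ} (h : ∀ i s, x i s ≡ y i s [ZMOD q]) (i j : Fin m) :
    quadZ A x i j ≡ quadZ A y i j [ZMOD q] := by
  refine Int.ModEq.sum fun s _ => Int.ModEq.sum fun t _ => ?_
  exact ((h i s).mul_right _).mul (h j t)

/-- `Saq` written with an integer numerator. -/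
theorem Saq_eq {m n : ℕ} (A : Matrix (Fin n) (Fin n) ℤ) (q : ℤ) (a b : Idx m → ℤ) :
    Saq A q a b =
      ∑ z ∈ (Finset.Icc (fun _ _ => 0) (fun _ _ => q - 1) : Finset (Fin m → Fin n → ℤ)),
        eR (((∑ p : Idx m, a p * (quadZ A z p.1.1 p.1.2 - b p) : ℤ) : ℝ) / (q : ℝ)) := by
  simp [Saq]

theorem Saq_mul_mul {m n : ℕ} (A : Matrix (Fin n) (Fin n) ℤ) (q k : ℕ) (hq : 0 < q)
    (hk : 0 < k) (a b : Idx m → ℤ) :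
    Saq A ((q : ℤ) * k) (fun p => k * a p) b = (k : ℂ) ^ (m * n) * Saq A q a b := by
  have hk' : (k : ℝ) ≠ 0 := by exact_mod_cast hk.ne'
  have hq' : (q : ℝ) ≠ 0 := by exact_mod_cast hq.ne'
  rw [Saq_eq, Saq_eq, ← sum_Icc_mul_of_periodic q k hq]
  · refine Finset.sum_congr rfl fun z _ => ?_
    congr 1
    simp only [mul_assoc, ← Finset.mul_sum]
    push_cast
    field_simp
  · intro z
    refine eR_div_congr (by exact_mod_cast hq) ?_
    refine Int.ModEq.sum fun p _ => ?_
    exact ((quadZ_modEq A q (fun i s => Int.mod_modEq _ _) _ _).sub_right _).mul_left _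

/-- The sum of all complete exponential sums of modulus `q`, primitive or not. -/
def fullSum {m n : ℕ} (A : Matrix (Fin n) (Fin n) ℤ) (B : Matrix (Fin m) (Fin m) ℤ)
    (q : ℕ) : ℂ :=
  ∑ a ∈ (Finset.Icc (fun _ => 0) (fun _ => (q : ℤ) - 1) : Finset (Idx m → ℤ)),
    Saq A q a (bvec B)

theorem resid_pow_succ (m p N : ℕ) (hp : p.Prime) :
    resid m ((p : ℤ) ^ (N + 1)) =
      (Finset.Icc (fun _ => 0) (fun _ => (p : ℤ) ^ (N + 1) - 1)).filter fun a =>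
        ¬ ∀ i, (p : ℤ) ∣ a i := by
  refine Finset.filter_congr fun a _ => ?_
  have hp' : Prime (p : ℤ) := Nat.prime_iff_prime_int.mp hp
  rw [← Int.isCoprime_iff_gcd_eq_one, IsCoprime.pow_left_iff (Nat.succ_pos N),
    (Prime.irreducible hp').coprime_iff_not_dvd, Finset.dvd_gcd_iff]
  simp

theorem fullSum_pow_succ {m n : ℕ} (A : Matrix (Fin n) (Fin n) ℤ)
    (B : Matrix (Fin m) (Fin m) ℤ) (p N : ℕ) (hp : p.Prime) :
    fullSum A B (p ^ (N + 1)) = (p : ℂ) ^ (m * n) * fullSum A B (p ^ N) +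
      ∑ a ∈ resid m ((p : ℤ) ^ (N + 1)), Saq A ((p : ℤ) ^ (N + 1)) a (bvec B) := by
  have hp0 : (0 : ℤ) < p := by exact_mod_cast hp.pos
  rw [resid_pow_succ m p N hp, fullSum, fullSum,
    ← Finset.sum_filter_add_sum_filter_not _ (fun a => ∀ i, (p : ℤ) ∣ a i)]
  push_cast
  congr 1
  rw [Finset.mul_sum]
  symm
  refine Finset.sum_bij (fun a _ => fun i => (p : ℤ) * a i) ?_ ?_ ?_ ?_
  · intro a ha
    simp only [Finset.mem_filter, Finset.mem_Icc, Pi.le_def] at ha ⊢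
    refine ⟨⟨fun i => mul_nonneg hp0.le (ha.1 i), fun i => ?_⟩, fun i => dvd_mul_right _ _⟩
    have h := mul_le_mul_of_nonneg_left (ha.2 i) hp0.le
    rw [pow_succ']
    rw [mul_sub] at h
    lia
  · intro a _ c _ h
    funext i
    exact mul_left_cancel₀ hp0.ne' (congrFun h i)
  · intro a ha
    simp only [Finset.mem_filter, Finset.mem_Icc, Pi.le_def] at ha
    choose c hc using ha.2
    refine ⟨c, ?_, (funext hc).symm⟩
    simp only [Finset.mem_Icc, Pi.le_def]
    refine ⟨fun i => ?_, fun i => ?_⟩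
    · have h := ha.1.1 i
      rw [hc i] at h
      exact nonneg_of_mul_nonneg_right h hp0
    · have h := ha.1.2 i
      rw [hc i, pow_succ'] at h
      have : c i < (p : ℤ) ^ N := lt_of_mul_lt_mul_left (by lia) hp0.le
      lia
  · intro a _
    have h := Saq_mul_mul A (p ^ N) p (pow_pos hp.pos N) hp.pos a (bvec B)
    push_cast at h
    rw [← h, pow_succ]

theorem sum_resid_eq_fullSum {m n : ℕ} (A : Matrix (Fin n) (Fin n) ℤ)
    (B : Matrix (Fin m) (Fin m) ℤ) (p : ℕ) (hp : p.Prime) (N : ℕ) :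
    ∑ r ∈ Finset.range (N + 1), ((p : ℂ) ^ (-((r : ℤ) * ((m : ℤ) * (n : ℤ))))) *
        ∑ a ∈ resid m ((p : ℤ) ^ r), Saq A ((p : ℤ) ^ r) a (bvec B) =
      ((p : ℂ) ^ (-((N : ℤ) * ((m : ℤ) * (n : ℤ))))) * fullSum A B (p ^ N) := by
  have hp0 : (p : ℂ) ≠ 0 := by exact_mod_cast hp.ne_zero
  induction N with
  | zero => simp [fullSum, resid]
  | succ N ih =>
    rw [Finset.sum_range_succ, ih, fullSum_pow_succ A B p N hp, mul_add,
      ← mul_assoc _ ((p : ℂ) ^ (m * n))]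
    congr 2
    rw [← zpow_natCast, ← zpow_add₀ hp0]
    push_cast
    ring_nf

theorem card_Idx (m : ℕ) : Fintype.card (Idx m) = m * (m + 1) / 2 := by
  have h : Fintype.card (Idx m) = ∑ i : Fin m, (m - i) := by
    rw [Fintype.card_subtype, Finset.card_filter, Fintype.sum_prod_type]
    refine Finset.sum_congr rfl fun i _ => ?_
    rw [← Finset.card_filter, ← Fin.card_Ici]
    congr 1
    ext j
    simp
  rw [h, Fin.sum_univ_eq_sum_range fun i => m - i]
  have h2 := Finset.sum_range_reflect (fun i => i + 1) m
  have h3 : ∑ i ∈ Finset.range m, (m - i) = ∑ i ∈ Finset.range m, (m - 1 - i + 1) :=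
    Finset.sum_congr rfl fun i hi => by
      have := Finset.mem_range.mp hi
      lia
  rw [h3, h2, ← Finset.sum_range_succ' (fun i => i) m |>.trans (add_zero _),
    Finset.sum_range_id, Nat.add_sub_cancel, mul_comm]

/-- The congruence `XᵀAX ≡ B` only needs to be tested on and above the diagonal. -/
theorem transpose_mul_mul_eq_iff {m n q : ℕ} {A : Matrix (Fin n) (Fin n) ℤ} (hA : A.IsSymm)
    {B : Matrix (Fin m) (Fin m) ℤ} (hB : B.IsSymm) (z : Fin m → Fin n → ℤ) :
    ((Matrix.of fun s i => ((z i s : ℤ) : ZMod q))ᵀ * A.map ((↑) : ℤ → ZMod q) *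
        (Matrix.of fun s i => ((z i s : ℤ) : ZMod q)) = B.map ((↑) : ℤ → ZMod q)) ↔
      ∀ p : Idx m, (q : ℤ) ∣ quadZ A z p.1.1 p.1.2 - bvec B p := by
  have hentry : ∀ i j, ((Matrix.of fun s i => ((z i s : ℤ) : ZMod q))ᵀ *
      A.map ((↑) : ℤ → ZMod q) * (Matrix.of fun s i => ((z i s : ℤ) : ZMod q))) i j =
        ((quadZ A z i j : ℤ) : ZMod q) := by
    intro i j
    simp only [Matrix.mul_apply, quadZ, Finset.sum_mul, Matrix.transpose_apply, Matrix.of_apply,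
      Matrix.map_apply]
    rw [Finset.sum_comm]
    push_cast
    rfl
  have hsymm : ∀ i j, quadZ A z i j = quadZ A z j i := by
    intro i j
    simp only [quadZ]
    rw [Finset.sum_comm]
    refine Finset.sum_congr rfl fun s _ => Finset.sum_congr rfl fun t _ => ?_
    rw [hA.apply]
    ring
  have hdvd : ∀ i j, (q : ℤ) ∣ quadZ A z i j - B i j ↔
      ((quadZ A z i j : ℤ) : ZMod q) = ((B i j : ℤ) : ZMod q) := by
    intro i j
    rw [← ZMod.intCast_zmod_eq_zero_iff_dvd, Int.cast_sub, sub_eq_zero]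
  constructor
  · intro h p
    rw [bvec, hdvd, ← hentry, h, Matrix.map_apply]
  · intro h
    ext i j
    rw [hentry, Matrix.map_apply, ← hdvd]
    rcases le_total i j with hij | hij
    · exact h ⟨(i, j), hij⟩
    · rw [hsymm, ← hB.apply]
      exact h ⟨(j, i), hij⟩

theorem locCount_eq_card_filter {m n : ℕ} {A : Matrix (Fin n) (Fin n) ℤ} (hA : A.IsSymm)
    {B : Matrix (Fin m) (Fin m) ℤ} (hB : B.IsSymm) (q : ℕ) (hq : 0 < q) :
    locCount m n A B q =
      ((Finset.Icc (fun _ _ => 0) (fun _ _ => (q : ℤ) - 1) :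
        Finset (Fin m → Fin n → ℤ)).filter fun z =>
          ∀ p : Idx m, (q : ℤ) ∣ quadZ A z p.1.1 p.1.2 - bvec B p).card := by
  classical
  have : NeZero q := ⟨hq.ne'⟩
  rw [locCount, Set.coe_ofPred, Nat.card_eq_fintype_card, Fintype.card_subtype]
  symm
  refine Finset.card_bij (fun z _ => Matrix.of fun s i => ((z i s : ℤ) : ZMod q)) ?_ ?_ ?_
  · intro z hz
    rw [Finset.mem_filter] at hz ⊢
    exact ⟨Finset.mem_univ _, (transpose_mul_mul_eq_iff hA hB z).mpr hz.2⟩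
  · intro z hz w hw h
    simp only [Finset.mem_filter, Finset.mem_Icc, Pi.le_def] at hz hw
    funext i s
    have h1 : ((z i s : ℤ) : ZMod q) = ((w i s : ℤ) : ZMod q) := congrFun (congrFun h s) i
    rw [ZMod.intCast_eq_intCast_iff] at h1
    have hz1 := hz.1.1 i s
    have hz2 := hz.1.2 i s
    have hw1 := hw.1.1 i s
    have hw2 := hw.1.2 i s
    rwa [Int.ModEq, Int.emod_eq_of_lt hz1 (by lia), Int.emod_eq_of_lt hw1 (by lia)] at h1
  · intro X hX
    rw [Finset.mem_filter] at hX
    have hXz : (Matrix.of fun s i => (((X s i).val : ℤ) : ZMod q)) = X := by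
      ext s i
      simp
    refine ⟨fun i s => (X s i).val, ?_, hXz⟩
    rw [Finset.mem_filter]
    refine ⟨?_, (transpose_mul_mul_eq_iff hA hB _).mp (by rw [hXz]; exact hX.2)⟩
    simp only [Finset.mem_Icc, Pi.le_def]
    refine ⟨fun i s => Int.natCast_nonneg _, fun i s => ?_⟩
    have := ZMod.val_lt (X s i)
    lia

theorem fullSum_eq_locCount {m n : ℕ} {A : Matrix (Fin n) (Fin n) ℤ} (hA : A.IsSymm)
    {B : Matrix (Fin m) (Fin m) ℤ} (hB : B.IsSymm) (q : ℕ) (hq : 0 < q) :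
    fullSum A B q = (q : ℂ) ^ (m * (m + 1) / 2) * locCount m n A B q := by
  simp only [fullSum, Saq, Int.cast_natCast]
  rw [Finset.sum_comm]
  simp only [sum_eR_sum_mul_div q hq]
  rw [← Finset.sum_filter, Finset.sum_const, ← locCount_eq_card_filter hA hB q hq, card_Idx,
    nsmul_eq_mul, mul_comm]

theorem sum_resid_eq_locCount {m n : ℕ} {A : Matrix (Fin n) (Fin n) ℤ} (hA : A.IsSymm)
    {B : Matrix (Fin m) (Fin m) ℤ} (hB : B.IsSymm) (p : ℕ) (hp : p.Prime) (N : ℕ) :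
    ∑ r ∈ Finset.range (N + 1), ((p : ℂ) ^ (-((r : ℤ) * ((m : ℤ) * (n : ℤ))))) *
        ∑ a ∈ resid m ((p : ℤ) ^ r), Saq A ((p : ℤ) ^ r) a (bvec B) =
      ((p : ℂ) ^ (-(N : ℤ) * ((m : ℤ) * (n : ℤ) - (m : ℤ) * ((m : ℤ) + 1) / 2))) *
        (locCount m n A B (p ^ N) : ℂ) := by
  have hp0 : (p : ℂ) ≠ 0 := by exact_mod_cast hp.ne_zero
  rw [sum_resid_eq_fullSum A B p hp N, fullSum_eq_locCount hA hB _ (pow_pos hp.pos N),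
    ← mul_assoc]
  congr 1
  rw [Nat.cast_pow, ← pow_mul, ← zpow_natCast, ← zpow_add₀ hp0]
  push_cast
  ring_nf

/-- A series whose partial sums are eventually constant has that constant as its sum. -/
theorem hasSum_of_eventually_sum_range_eq {f : ℕ → ℂ} {s : ℂ}
    (h : ∀ᶠ N in atTop, ∑ r ∈ Finset.range (N + 1), f r = s) : HasSum f s := by
  obtain ⟨M, hM⟩ := eventually_atTop.mp h
  rw [← hM M le_rfl]
  refine hasSum_sum_of_ne_finset_zero fun r hr => ?_
  have hr' : M + 1 ≤ r := by simpa using hr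
  obtain ⟨k, rfl⟩ := Nat.exists_eq_add_of_le' (Nat.one_le_of_lt hr')
  have h1 := hM (k + 1) (by lia)
  rw [Finset.sum_range_succ, hM k (by lia)] at h1
  simpa using h1


/-- local factors of the singular series. -/
theorem stmt15 (m n : ℕ) [NeZero m] [NeZero n]
    (A : Matrix (Fin n) (Fin n) ℤ) (hAs : A.IsSymm)
    (hApd : (A.map ((↑) : ℤ → ℝ)).PosDef)
    (B : Matrix (Fin m) (Fin m) ℤ) (hBs : B.IsSymm)
    (hBpd : (B.map ((↑) : ℤ → ℝ)).PosDef)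
    (hBmono : ∀ i j : Fin m, i ≤ j → B i i ≤ B j j)
    (hBoff : ∀ i j : Fin m, i < j → |B i j| ≤ B i i)
    (hB11 : 2 ≤ B 0 0) :
    ∀ p : ℕ, p.Prime →
      (∀ N : ℕ,
        ∑ r ∈ Finset.range (N + 1),
            ((p : ℂ) ^ (-((r : ℤ) * ((m : ℤ) * (n : ℤ))))) *
              ∑ a ∈ resid m ((p : ℤ) ^ r), Saq A ((p : ℤ) ^ r) a (bvec B) =
          ((p : ℂ) ^ (-(N : ℤ) * ((m : ℤ) * (n : ℤ) - (m : ℤ) * ((m : ℤ) + 1) / 2))) *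
            (locCount m n A B (p ^ N) : ℂ)) ∧
      ((n : ℝ) > (2 * gamT B + (m : ℝ) * ((m : ℝ) - 1)) *
          ((m : ℝ) * ((m : ℝ) + 1) / 2 + 1) →
        ∀ α : ℝ,
          (∀ᶠ t : ℕ in Filter.atTop,
            α = (p : ℝ) ^ (-(t : ℤ) * ((m : ℤ) * (n : ℤ) - (m : ℤ) * ((m : ℤ) + 1) / 2)) *
              (locCount m n A B (p ^ t) : ℝ)) →
          HasSum (fun r : ℕ =>
              ((p : ℂ) ^ (-((r : ℤ) * ((m : ℤ) * (n : ℤ))))) *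
                ∑ a ∈ resid m ((p : ℤ) ^ r), Saq A ((p : ℤ) ^ r) a (bvec B))
            ((α : ℝ) : ℂ)) := by
  intro p hp
  refine ⟨sum_resid_eq_locCount hAs hBs p hp, fun _ α hα => ?_⟩
  refine hasSum_of_eventually_sum_range_eq ?_
  filter_upwards [hα] with t ht
  rw [sum_resid_eq_locCount hAs hBs p hp, ht]
  push_cast
  rfl
end
end

section
/- Let c = (c_{ij})_{1≤i≤j≤m} with c_{ij} = (P_iP_j)^{−1}B_{ij}, and let V(c) ⊂ ℝ^{mn} be the real variety of tuples (x_1,…,x_m), x_i ∈ ℝ^n, satisfying x_i^T A x_j = c_{ij} for all 1 ≤ i ≤ j ≤ m. Then (i) V(c) is non-empty, and (ii) V(c) is non-singular: at every point of V(c), the R×mn Jacobian matrix of the R forms G_{ij}(x) = x_i^T A x_j − c_{ij} (1 ≤ i ≤ j ≤ m) with respect to the mn coordinates has full rank R. In particular, any real n×m matrix X with X^T A X equal to the nonsingular matrix (c_{ij})_{1≤i,j≤m} has rank m. -/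
open scoped BigOperators
open MeasureTheory Matrix Filter

noncomputable section

lemma quadR_eq_mul_apply {m n : ℕ} (A : Matrix (Fin n) (Fin n) ℤ) (v : Fin m → Fin n → ℝ)
    (i j : Fin m) :
    quadR A v i j = (Matrix.of v * A.map ((↑) : ℤ → ℝ) * (Matrix.of v)ᵀ) i j := by
  simp only [quadR, Matrix.mul_apply, Matrix.of_apply, Matrix.map_apply, Matrix.transpose_apply,
    Finset.sum_mul]
  exact Finset.sum_comm

lemma differentiable_quadR {m n : ℕ} (A : Matrix (Fin n) (Fin n) ℤ) (i j : Fin m) :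
    Differentiable ℝ fun v : Fin m → Fin n → ℝ => quadR A v i j := by
  unfold quadR
  fun_prop

/-- The derivative of `v ↦ vᵢᵀ A vⱼ` along a line. -/
lemma hasLineDerivAt_quadR {m n : ℕ} (A : Matrix (Fin n) (Fin n) ℤ)
    (x h : Fin m → Fin n → ℝ) (i j : Fin m) :
    HasLineDerivAt ℝ (fun v : Fin m → Fin n → ℝ => quadR A v i j)
      ((Matrix.of h * A.map ((↑) : ℤ → ℝ) * (Matrix.of x)ᵀ +
        Matrix.of x * A.map ((↑) : ℤ → ℝ) * (Matrix.of h)ᵀ) i j) x h := by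
  set A' : Matrix (Fin n) (Fin n) ℝ := A.map ((↑) : ℤ → ℝ)
  have expand : (fun t : ℝ => quadR A (x + t • h) i j) = fun t =>
      (Matrix.of x * A' * (Matrix.of x)ᵀ) i j +
      t * (Matrix.of h * A' * (Matrix.of x)ᵀ + Matrix.of x * A' * (Matrix.of h)ᵀ) i j +
      t ^ 2 * (Matrix.of h * A' * (Matrix.of h)ᵀ) i j := by
    funext t
    have hof : Matrix.of (x + t • h) = Matrix.of x + t • Matrix.of h := rfl
    rw [quadR_eq_mul_apply, hof]
    simp only [Matrix.transpose_add, Matrix.transpose_smul, Matrix.add_mul, Matrix.mul_add,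
      Matrix.smul_mul, Matrix.mul_smul, Matrix.add_apply, Matrix.smul_apply, smul_eq_mul, A']
    ring
  unfold HasLineDerivAt
  rw [expand]
  have hlin := (((hasDerivAt_id (0 : ℝ)).mul_const
    ((Matrix.of h * A' * (Matrix.of x)ᵀ + Matrix.of x * A' * (Matrix.of h)ᵀ) i j)).const_add
    ((Matrix.of x * A' * (Matrix.of x)ᵀ) i j)).add
    (((hasDerivAt_id (0 : ℝ)).pow 2).mul_const ((Matrix.of h * A' * (Matrix.of h)ᵀ) i j))
  refine (hlin.congr_deriv ?_).congr_of_eventuallyEq (.of_forall fun t => ?_)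
  · simp only [id, one_mul, Nat.reduceSub, pow_one, mul_zero, zero_mul, add_zero]
  · rfl

/-- If the Gram matrix `x A xᵀ` is invertible, then every symmetric matrix is attained by
the differential `h ↦ h A xᵀ + x A hᵀ`. -/
lemma exists_add_transpose_eq {m n : ℕ} (A : Matrix (Fin n) (Fin n) ℝ) (hA : A.IsSymm)
    (x : Matrix (Fin m) (Fin n) ℝ) (hx : IsUnit (x * A * xᵀ).det)
    (T : Matrix (Fin m) (Fin m) ℝ) (hT : T.IsSymm) :
    ∃ h : Matrix (Fin m) (Fin n) ℝ, h * A * xᵀ + x * A * hᵀ = T := by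
  have key : ((1 / 2 : ℝ) • (T * (x * A * xᵀ)⁻¹ * x)) * A * xᵀ = (1 / 2 : ℝ) • T := by
    simp only [Matrix.smul_mul]
    rw [Matrix.mul_assoc, Matrix.mul_assoc, ← Matrix.mul_assoc x, Matrix.mul_assoc,
      Matrix.nonsing_inv_mul _ hx, Matrix.mul_one]
  refine ⟨(1 / 2 : ℝ) • (T * (x * A * xᵀ)⁻¹ * x), ?_⟩
  set h := (1 / 2 : ℝ) • (T * (x * A * xᵀ)⁻¹ * x)
  have key' : x * A * hᵀ = (1 / 2 : ℝ) • T := by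
    have := congrArg Matrix.transpose key
    rwa [Matrix.transpose_mul, Matrix.transpose_mul, Matrix.transpose_transpose, hA.eq,
      Matrix.transpose_smul _ T, hT.eq, ← Matrix.mul_assoc] at this
  rw [key, key', ← add_smul]
  norm_num

lemma PP_pos {m : ℕ} [NeZero m] {C : ℝ} (hC : 1 ≤ C) {B : Matrix (Fin m) (Fin m) ℤ}
    {i : Fin m} (hi : 0 < B i i) : 0 < PP C B i := by
  have : (0 : ℝ) < B i i := by exact_mod_cast hi
  unfold PP
  positivity

/-- The matrix `(B_{ij} / (P_i P_j))` is nonsingular. -/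
lemma isUnit_det_rescale {m : ℕ} (P : Fin m → ℝ) (hP : ∀ i, 0 < P i)
    (B : Matrix (Fin m) (Fin m) ℝ) (hB : B.PosDef) :
    IsUnit (Matrix.of fun i j => (P i * P j)⁻¹ * B i j).det := by
  have factor : (Matrix.of fun i j => (P i * P j)⁻¹ * B i j) =
      Matrix.diagonal (fun i => (P i)⁻¹) * B * Matrix.diagonal (fun i => (P i)⁻¹) := by
    ext i j
    simp only [Matrix.of_apply, Matrix.mul_diagonal, Matrix.diagonal_mul, mul_inv]
    ring
  rw [factor, Matrix.det_mul, Matrix.det_mul, Matrix.det_diagonal, isUnit_iff_ne_zero]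
  have hprod : ∏ i, (P i)⁻¹ ≠ 0 := Finset.prod_ne_zero_iff.mpr fun i _ => (inv_pos.mpr (hP i)).ne'
  exact mul_ne_zero (mul_ne_zero hprod hB.det_pos.ne') hprod

/-- Lemma 6.2, the variety `V(c)` is non-empty and non-singular. -/
theorem stmt16 (m n : ℕ) [NeZero m] [NeZero n]
    (A : Matrix (Fin n) (Fin n) ℤ) (hAs : A.IsSymm)
    (hApd : (A.map ((↑) : ℤ → ℝ)).PosDef)
    (B : Matrix (Fin m) (Fin m) ℤ) (hBs : B.IsSymm)
    (hBpd : (B.map ((↑) : ℤ → ℝ)).PosDef)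
    (hBmono : ∀ i j : Fin m, i ≤ j → B i i ≤ B j j)
    (hBoff : ∀ i j : Fin m, i < j → |B i j| ≤ B i i)
    (hB11 : 2 ≤ B 0 0)
    (C : ℝ) (hC : 1 ≤ C)
    (hCbig : ∃ y : Fin m → Fin n → ℝ,
      (∀ p : Idx m, quadR A y p.1.1 p.1.2 = (bvec B p : ℝ)) ∧
      ∀ i : Fin m, ∀ t : Fin n, |y i t| < PP C B i) :
    (∃ x : Fin m → Fin n → ℝ, ∀ p : Idx m,
        quadR A x p.1.1 p.1.2 = (PP C B p.1.1 * PP C B p.1.2)⁻¹ * (bvec B p : ℝ)) ∧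
    (∀ x : Fin m → Fin n → ℝ,
      (∀ p : Idx m,
        quadR A x p.1.1 p.1.2 = (PP C B p.1.1 * PP C B p.1.2)⁻¹ * (bvec B p : ℝ)) →
      Function.Surjective
        ⇑(fderiv ℝ (fun y : Fin m → Fin n → ℝ => fun p : Idx m =>
            quadR A y p.1.1 p.1.2 - (PP C B p.1.1 * PP C B p.1.2)⁻¹ * (bvec B p : ℝ)) x)) ∧
    (∀ X : Matrix (Fin n) (Fin m) ℝ,
      Xᵀ * A.map ((↑) : ℤ → ℝ) * X =
        Matrix.of (fun i j : Fin m => (PP C B i * PP C B j)⁻¹ * ((B i j : ℤ) : ℝ)) →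
      X.rank = m) := by
  have hPP : ∀ i, 0 < PP C B i := fun i =>
    PP_pos hC (by have := hBmono 0 i (Fin.zero_le i); omega)
  set A' : Matrix (Fin n) (Fin n) ℝ := A.map ((↑) : ℤ → ℝ) with hA'
  have hA's : A'.IsSymm := hAs.map _
  set c : Matrix (Fin m) (Fin m) ℝ :=
    Matrix.of fun i j => (PP C B i * PP C B j)⁻¹ * ((B i j : ℤ) : ℝ) with hc
  have hcdet : IsUnit c.det := isUnit_det_rescale (PP C B) hPP _ hBpd
  have hcs : c.IsSymm := Matrix.IsSymm.ext fun i j => by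
    simp only [hc, Matrix.of_apply, hBs.apply, mul_comm (PP C B j)]
  refine ⟨?_, ?_, ?_⟩
  · obtain ⟨y, hy, -⟩ := hCbig
    refine ⟨fun i t => (PP C B i)⁻¹ * y i t, fun p => ?_⟩
    rw [← hy p]
    simp only [quadR, Finset.mul_sum, mul_inv]
    exact Finset.sum_congr rfl fun s _ => Finset.sum_congr rfl fun t _ => by ring
  · intro x hx T
    have gram : Matrix.of x * A' * (Matrix.of x)ᵀ = c := by
      have hsymm : (Matrix.of x * A' * (Matrix.of x)ᵀ).IsSymm := by
        simp only [Matrix.IsSymm, Matrix.transpose_mul, Matrix.transpose_transpose, hA's.eq,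
          Matrix.mul_assoc]
      have upper : ∀ i j, i ≤ j → (Matrix.of x * A' * (Matrix.of x)ᵀ) i j = c i j :=
        fun i j hij => by rw [hA', ← quadR_eq_mul_apply]; exact hx ⟨(i, j), hij⟩
      ext i j
      rcases le_total i j with hij | hij
      · exact upper i j hij
      · rw [← hsymm.apply, ← hcs.apply]
        exact upper j i hij
    set S : Matrix (Fin m) (Fin m) ℝ :=
      Matrix.of fun i j => T ⟨(min i j, max i j), min_le_max⟩ with hS
    have hSs : S.IsSymm := Matrix.IsSymm.ext fun i j => by
      simp only [hS, Matrix.of_apply, min_comm j, max_comm j]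
    obtain ⟨h, hh⟩ := exists_add_transpose_eq A' hA's (Matrix.of x) (gram ▸ hcdet) S hSs
    obtain ⟨h, rfl⟩ := Matrix.of.surjective h
    refine ⟨h, ?_⟩
    funext p
    have hdiff : ∀ q : Idx m, DifferentiableAt ℝ (fun y : Fin m → Fin n → ℝ =>
        quadR A y q.1.1 q.1.2 - (PP C B q.1.1 * PP C B q.1.2)⁻¹ * (bvec B q : ℝ)) x :=
      fun q => (differentiable_quadR A _ _ x).sub_const _
    rw [fderiv_pi hdiff, ContinuousLinearMap.pi_apply, fderiv_sub_const]
    rw [((differentiable_quadR A p.1.1 p.1.2 x).hasFDerivAt.hasLineDerivAt h).unique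
      (hasLineDerivAt_quadR A x h p.1.1 p.1.2)]
    refine (congrFun (congrFun hh p.1.1) p.1.2).trans ?_
    simp only [hS, Matrix.of_apply, min_eq_left p.2, max_eq_right p.2]
  · intro X hX
    refine le_antisymm (X.rank_le_width) ?_
    have hrank : c.rank = m := by
      simpa using Matrix.rank_of_isUnit c ((Matrix.isUnit_iff_isUnit_det c).mpr hcdet)
    calc m = (Xᵀ * A' * X).rank := by rw [hX, hrank]
      _ ≤ X.rank := Matrix.rank_mul_le_right _ _
end
end
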